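/- If ẑ satisfies the quadratic convolution recurrence (l+1)ẑ_{l+1} = Σ_{l'=0}^{l} ẑ_{l'}ẑ_{l-l'}, then z_n := Σ_{l=0}^{n} (n!/(n-l)!)·ẑ_l satisfies z_{n+1} - z_n = Σ' over k₁+k₂ ≤ n of ((-1)^{k₁+k₂+n}/(k₁!k₂!))·z_{k₁}z_{k₂}·n!/(n-k₁-k₂)!. -/

import Mathlib

open Finset

/-!
The ordinary generating function `A` of `zhat` satisfies the Riccati equation `A' = A²`, and the
exponential generating function of `z` is `Z = A * exp`. Hence `Z' - Z = A² * exp = Z² * exp(-X)`,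
and comparing coefficients gives the discrete quadratic map.
-/

open scoped Nat

theorem sum_filter_add_le_eq_sum_antidiagonal {M : Type*} [AddCommMonoid M] (n : ℕ)
    (f : ℕ × ℕ → M) :
    ∑ p ∈ (range (n + 1) ×ˢ range (n + 1)).filter (fun p => p.1 + p.2 ≤ n), f p
      = ∑ m ∈ range (n + 1), ∑ p ∈ antidiagonal m, f p := by
  rw [sum_sigma']
  refine sum_bij' (fun p _ => ⟨p.1 + p.2, p⟩) (fun q _ => q.2) ?_ ?_ ?_ ?_ ?_ <;>
    grind [HasAntidiagonal.mem_antidiagonal]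

theorem inv_factorial_mul_descFactorial {K : Type*} [Field K] [CharZero K] {n k : ℕ}
    (hk : k ≤ n) : (n ! : K)⁻¹ * n.descFactorial k = ((n - k)! : K)⁻¹ := by
  have hdesc : (n.descFactorial k : K) ≠ 0 := by
    exact_mod_cast (Nat.descFactorial_pos.2 hk).ne'
  rw [← Nat.factorial_mul_descFactorial hk, Nat.cast_mul, mul_inv, inv_mul_cancel_right₀ hdesc]

section RiccatiEquation

open PowerSeries

theorem derivative_mk_eq_sq {R : Type*} [CommSemiring R] {a : ℕ → R}
    (hrec : ∀ l : ℕ, ((l : R) + 1) * a (l + 1) = ∑ l' ∈ range (l + 1), a l' * a (l - l')) :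
    d⁄dX R (mk a) = mk a ^ 2 := by
  ext n
  simp only [coeff_derivative, sq, coeff_mul, coeff_mk, Nat.sum_antidiagonal_eq_sum_range_succ_mk]
  rw [← hrec n, mul_comm]

theorem derivative_mul_exp_sub_of_derivative_eq_sq {R : Type*} [CommRing R] [Algebra ℚ R]
    {A : R⟦X⟧} (hA : d⁄dX R A = A ^ 2) :
    d⁄dX R (A * exp R) - A * exp R = (A * exp R) * (A * exp R) * evalNegHom (exp R) := by
  have hexp : exp R * evalNegHom (exp R) = 1 := exp_mul_exp_neg_eq_one
  calc d⁄dX R (A * exp R) - A * exp R = A ^ 2 * exp R := by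
        rw [Derivation.leibniz, hA, derivative_exp, smul_eq_mul, smul_eq_mul]
        ring
    _ = (A * exp R) * (A * exp R) * evalNegHom (exp R) := by
        linear_combination (-(A ^ 2 * exp R)) * hexp

end RiccatiEquation

section ExponentialGeneratingFunction

open PowerSeries

section Module

variable {R : Type*} [Semiring R] [Module ℚ R]

/-- The exponential generating function `∑ aₙ Xⁿ / n!` of a sequence `a`. Division by `n!` is
scalar multiplication by a rational number, so that `R` need not be a field. -/
noncomputable def expGenFun (a : ℕ → R) : R⟦X⟧ :=
  mk fun n => (n ! : ℚ)⁻¹ • a n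

@[simp]
theorem coeff_expGenFun (a : ℕ → R) (n : ℕ) : coeff n (expGenFun a) = (n ! : ℚ)⁻¹ • a n :=
  coeff_mk n _

theorem expGenFun_injective : Function.Injective (expGenFun : (ℕ → R) → R⟦X⟧) := by
  intro a b hab
  funext n
  have hfact : (n ! : ℚ)⁻¹ ≠ 0 := by positivity
  have hcoeff := congrArg (coeff n) hab
  simp only [coeff_expGenFun] at hcoeff
  exact MulAction.injective₀ hfact hcoeff

end Module

theorem expGenFun_sub {R : Type*} [Ring R] [Module ℚ R] (a b : ℕ → R) :
    expGenFun (fun n => a n - b n) = expGenFun a - expGenFun b := by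
  ext n
  simp only [map_sub, coeff_expGenFun, smul_sub]

theorem derivative_expGenFun {R : Type*} [CommSemiring R] [Algebra ℚ R] (a : ℕ → R) :
    d⁄dX R (expGenFun a) = expGenFun fun n => a (n + 1) := by
  ext n
  have hfact : (((n + 1)! : ℕ) : ℚ)⁻¹ * (n + 1) = (n ! : ℚ)⁻¹ := by
    rw [Nat.factorial_succ]
    push_cast
    field_simp
  simp only [coeff_derivative, coeff_expGenFun, ← hfact, Algebra.smul_def, map_mul, map_add,
    map_natCast, map_one]
  ring

theorem expGenFun_mul_mul {R : Type*} [Semiring R] [Algebra ℚ R] (a b c : ℕ → R) :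
    expGenFun a * expGenFun b * expGenFun c = expGenFun fun n =>
      ∑ p ∈ (range (n + 1) ×ˢ range (n + 1)).filter (fun p => p.1 + p.2 ≤ n),
        ((n.descFactorial (p.1 + p.2) : ℚ) / ((p.1 ! : ℚ) * (p.2 ! : ℚ))) •
          (a p.1 * b p.2 * c (n - (p.1 + p.2))) := by
  ext n
  rw [coeff_expGenFun, sum_filter_add_le_eq_sum_antidiagonal, coeff_mul,
    Nat.sum_antidiagonal_eq_sum_range_succ_mk, smul_sum]
  refine sum_congr rfl fun m hm => ?_
  rw [coeff_mul, sum_mul, smul_sum]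
  refine sum_congr rfl fun p hp => ?_
  have hmn : m ≤ n := Nat.lt_succ_iff.mp (mem_range.mp hm)
  rw [HasAntidiagonal.mem_antidiagonal.mp hp, smul_smul, ← mul_div_assoc,
    inv_factorial_mul_descFactorial hmn]
  simp only [coeff_expGenFun, smul_mul_smul_comm]
  congr 1
  field_simp

theorem expGenFun_neg_one_pow {R : Type*} [CommRing R] [Algebra ℚ R] :
    expGenFun (fun n => (-1 : R) ^ n) = evalNegHom (exp R) := by
  ext n
  simp [evalNegHom, coeff_exp, Algebra.smul_def, mul_comm]

end ExponentialGeneratingFunction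

section InterpolatingTransform

/-- The falling-factorial interpolating transform `n ↦ ∑ₗ n! / (n - l)! * aₗ` of a sequence `a`. -/
def interpolatingTransform {R : Type*} [Semiring R] (a : ℕ → R) (n : ℕ) : R :=
  ∑ l ∈ range (n + 1), (n.descFactorial l : R) * a l

variable {R : Type*} [CommRing R] [Algebra ℚ R]

theorem expGenFun_interpolatingTransform (a : ℕ → R) :
    expGenFun (interpolatingTransform a) = PowerSeries.mk a * PowerSeries.exp R := by
  ext n
  rw [coeff_expGenFun, PowerSeries.coeff_mul, Nat.sum_antidiagonal_eq_sum_range_succ_mk,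
    interpolatingTransform, smul_sum]
  refine sum_congr rfl fun l hl => ?_
  have hln : l ≤ n := Nat.lt_succ_iff.mp (mem_range.mp hl)
  rw [PowerSeries.coeff_mk, PowerSeries.coeff_exp, one_div, ← inv_factorial_mul_descFactorial hln,
    Algebra.smul_def, map_mul, map_natCast]
  ring

theorem interpolating_transform_quadratic_map_general {a : ℕ → R}
    (hrec : ∀ l : ℕ, ((l : R) + 1) * a (l + 1) = ∑ l' ∈ range (l + 1), a l' * a (l - l'))
    (n : ℕ) :
    interpolatingTransform a (n + 1) - interpolatingTransform a n
      = ∑ p ∈ (range (n + 1) ×ˢ range (n + 1)).filter (fun p => p.1 + p.2 ≤ n),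
          ((-1 : ℚ) ^ (p.1 + p.2 + n) / ((p.1 ! : ℚ) * (p.2 ! : ℚ))
            * n.descFactorial (p.1 + p.2)) •
              (interpolatingTransform a p.1 * interpolatingTransform a p.2) := by
  set z := interpolatingTransform a
  have hZ : expGenFun z = PowerSeries.mk a * PowerSeries.exp R :=
    expGenFun_interpolatingTransform a
  have hdiff : expGenFun (fun n => z (n + 1) - z n)
      = expGenFun z * expGenFun z * expGenFun fun n => (-1) ^ n := by
    rw [expGenFun_sub, ← derivative_expGenFun, expGenFun_neg_one_pow, hZ]
    exact derivative_mul_exp_sub_of_derivative_eq_sq (derivative_mk_eq_sq hrec)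
  rw [expGenFun_mul_mul] at hdiff
  refine (congrFun (expGenFun_injective hdiff) n).trans (sum_congr rfl fun p hp => ?_)
  have hpn : p.1 + p.2 ≤ n := (mem_filter.mp hp).2
  have hsign : (-1 : ℚ) ^ (n - (p.1 + p.2)) = (-1) ^ (p.1 + p.2 + n) :=
    neg_one_pow_congr (by grind)
  simp only [← hsign, Algebra.smul_def, div_eq_mul_inv, map_mul, map_pow, map_neg, map_one]
  ring

end InterpolatingTransform

/-- If `zhat` satisfies the convolution recurrence `(l+1)zhat_{l+1} = Σ_{l'=0}^l zhat_{l'} zhat_{l-l'}`,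
then `z_n = Σ_{l=0}^n (n!/(n-l)!) zhat_l` satisfies the discrete quadratic map. -/
theorem interpolating_transform_quadratic_map (zhat : ℕ → ℝ)
    (hrec : ∀ l : ℕ, ((l : ℝ) + 1) * zhat (l + 1)
      = ∑ l' ∈ range (l + 1), zhat l' * zhat (l - l'))
    (z : ℕ → ℝ)
    (hz : ∀ n : ℕ, z n = ∑ l ∈ range (n + 1), (n.descFactorial l : ℝ) * zhat l) :
    ∀ n : ℕ, z (n + 1) - z n
      = ∑ p ∈ (range (n + 1) ×ˢ range (n + 1)).filter (fun p => p.1 + p.2 ≤ n),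
          (-1 : ℝ) ^ (p.1 + p.2 + n) / ((p.1.factorial : ℝ) * (p.2.factorial : ℝ))
            * z p.1 * z p.2 * (n.descFactorial (p.1 + p.2) : ℝ) := by
  obtain rfl : z = interpolatingTransform zhat := funext hz
  intro n
  rw [interpolating_transform_quadratic_map_general hrec n]
  exact sum_congr rfl fun p _ => by push_cast [Rat.smul_def]; ring
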